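/- The complex vector space of homogeneous polynomials g of degree 6 in ℂ[y₀,y₁,y₂,y₃] satisfying, for every singular point of B₆ = 0 represented by P ∈ ℂ⁴∖{0} with its associated pair of indices 1 ≤ i < j ≤ 3 such that Sᵢ(P) = Sⱼ(P) = 0, both g(P) = 0 and Σₜ (∂g/∂yₜ)(P)·wₜ = 0 for every w ∈ ℂ⁴ with Σₜ (∂Sᵢ/∂yₜ)(P)·wₜ = Σₜ (∂Sⱼ/∂yₜ)(P)·wₜ = 0, has dimension 33 (equivalently, these conditions at the 27 cusps have rank exactly 51 on the 84-dimensional space of sextic forms). -/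

import Mathlib

open MvPolynomial

/-- The Fermat cubic `R = y₀³ + y₁³ + y₂³ + y₃³`. -/
noncomputable def fermatR : MvPolynomial (Fin 4) ℂ := X 0 ^ 3 + X 1 ^ 3 + X 2 ^ 3 + X 3 ^ 3

/-- The cubic `S₁ = y₁³ + R`. -/
noncomputable def fermatS1 : MvPolynomial (Fin 4) ℂ := X 1 ^ 3 + fermatR

/-- The cubic `S₂ = y₂³ + R`. -/
noncomputable def fermatS2 : MvPolynomial (Fin 4) ℂ := X 2 ^ 3 + fermatR

/-- The cubic `S₃ = y₃³ + R`. -/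
noncomputable def fermatS3 : MvPolynomial (Fin 4) ℂ := X 3 ^ 3 + fermatR

/-- The cubic `S = y₁·y₂·y₃`. -/
noncomputable def fermatQ : MvPolynomial (Fin 4) ℂ := X 1 * X 2 * X 3
/-- The linear functional `g ↦ Σₜ (∂g/∂yₜ)(P)·wₜ` (the differential of `g` at `P`
evaluated on the vector `w`). -/
noncomputable def dirDeriv (P w : Fin 4 → ℂ) : MvPolynomial (Fin 4) ℂ →ₗ[ℂ] ℂ :=
  ∑ t : Fin 4, w t •
    ((aeval P : MvPolynomial (Fin 4) ℂ →ₐ[ℂ] ℂ).toLinearMap ∘ₗ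
      (pderiv t : Derivation ℂ (MvPolynomial (Fin 4) ℂ) (MvPolynomial (Fin 4) ℂ)).toLinearMap)

/-- The conditions imposed at a cusp `P` with associated pair `(Sᵢ, Sⱼ)`: vanishing
at `P`, and vanishing of the differential at `P` on the `2`-plane of vectors `w`
annihilated by the differentials of `Sᵢ` and `Sⱼ` at `P`. -/
noncomputable def cuspCondition (P : Fin 4 → ℂ) (Si Sj : MvPolynomial (Fin 4) ℂ) :
    Submodule ℂ (MvPolynomial (Fin 4) ℂ) :=
  LinearMap.ker (aeval P : MvPolynomial (Fin 4) ℂ →ₐ[ℂ] ℂ).toLinearMap ⊓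
    ⨅ (w : Fin 4 → ℂ) (_ : dirDeriv P w Si = 0 ∧ dirDeriv P w Sj = 0),
      LinearMap.ker (dirDeriv P w)

/-- The space of homogeneous sextic forms adapted to the `27` cusps of the residual
sextic: at `(1,0,a,b)` (pair `(S₂,S₃)`), at `(1,a,0,b)` (pair `(S₁,S₃)`) and at
`(1,a,b,0)` (pair `(S₁,S₂)`). -/
noncomputable def sexticsAdaptedToFermatCusps : Submodule ℂ (MvPolynomial (Fin 4) ℂ) :=
  homogeneousSubmodule (Fin 4) ℂ 6 ⊓
    ⨅ (a : ℂ) (b : ℂ) (_ : a ^ 3 = -(1/3) ∧ b ^ 3 = -(1/3)),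
      (cuspCondition ![1, 0, a, b] fermatS2 fermatS3 ⊓
        cuspCondition ![1, a, 0, b] fermatS1 fermatS3 ⊓
        cuspCondition ![1, a, b, 0] fermatS1 fermatS2)


/-! ### Coordinates on sextic forms -/

/-- The exponent vector of `y₀^(6-i-j-k) y₁^i y₂^j y₃^k`. -/
noncomputable def cuspEx (i j k : ℕ) : Fin 4 →₀ ℕ :=
  Finsupp.equivFunOnFinite.symm ![6 - i - j - k, i, j, k]

/-- The sextic form with given coefficients. -/
noncomputable def cuspPoly (c : ℕ → ℕ → ℕ → ℂ) : MvPolynomial (Fin 4) ℂ :=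
  ∑ i ∈ Finset.range 7, ∑ j ∈ Finset.range (7 - i), ∑ k ∈ Finset.range (7 - i - j),
    monomial (cuspEx i j k) (c i j k)

lemma cuspEx_inj {i j k i' j' k' : ℕ} (h : cuspEx i j k = cuspEx i' j' k') :
    i = i' ∧ j = j' ∧ k = k' := by
  have h1 := DFunLike.congr_fun h 1
  have h2 := DFunLike.congr_fun h 2
  have h3 := DFunLike.congr_fun h 3
  simp [cuspEx] at h1 h2 h3
  exact ⟨h1, h2, h3⟩

lemma coeff_cuspPoly (c : ℕ → ℕ → ℕ → ℂ) (i j k : ℕ) (h : i + j + k ≤ 6) :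
    coeff (cuspEx i j k) (cuspPoly c) = c i j k := by
  unfold cuspPoly
  simp only [coeff_sum, coeff_monomial]
  rw [Finset.sum_eq_single i, Finset.sum_eq_single j, Finset.sum_eq_single k]
  · simp
  · intro k' _ hk
    rw [if_neg]; intro h'; exact hk (cuspEx_inj h').2.2
  · intro h'; exfalso; apply h'; simp; omega
  · intro j' _ hj
    apply Finset.sum_eq_zero; intro k' _
    rw [if_neg]; intro h'; exact hj (cuspEx_inj h').2.1
  · intro h'; exfalso; apply h'; simp; omega
  · intro i' _ hi
    apply Finset.sum_eq_zero; intro j' _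
    apply Finset.sum_eq_zero; intro k' _
    rw [if_neg]; intro h'; exact hi (cuspEx_inj h').1
  · intro h'; exfalso; apply h'; simp; omega

lemma cuspEx_degree (i j k : ℕ) (h : i + j + k ≤ 6) : (cuspEx i j k).degree = 6 := by
  rw [Finsupp.degree_eq_sum]
  simp [cuspEx, Fin.sum_univ_four]
  omega

lemma cuspPoly_isHomogeneous (c : ℕ → ℕ → ℕ → ℂ) : (cuspPoly c).IsHomogeneous 6 := by
  unfold cuspPoly
  refine IsHomogeneous.sum _ _ _ fun i hi => IsHomogeneous.sum _ _ _ fun j hj =>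
    IsHomogeneous.sum _ _ _ fun k hk => ?_
  simp only [Finset.mem_range] at hi hj hk
  exact isHomogeneous_monomial _ (cuspEx_degree i j k (by omega))

lemma exists_cuspEx (m : Fin 4 →₀ ℕ) (h : m.degree = 6) :
    m 1 + m 2 + m 3 ≤ 6 ∧ m = cuspEx (m 1) (m 2) (m 3) := by
  rw [Finsupp.degree_eq_sum, Fin.sum_univ_four] at h
  refine ⟨by omega, ?_⟩
  ext t
  fin_cases t <;> simp [cuspEx]
  omega

lemma ext_cuspEx {f g : MvPolynomial (Fin 4) ℂ} (hf : f.IsHomogeneous 6) (hg : g.IsHomogeneous 6)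
    (h : ∀ i j k, i + j + k ≤ 6 → coeff (cuspEx i j k) f = coeff (cuspEx i j k) g) : f = g := by
  ext m
  by_cases hm : m.degree = 6
  · obtain ⟨h1, h2⟩ := exists_cuspEx m hm
    rw [h2]
    exact h _ _ _ h1
  · rw [hf.coeff_eq_zero hm, hg.coeff_eq_zero hm]

lemma eq_cuspPoly {g : MvPolynomial (Fin 4) ℂ} (hg : g.IsHomogeneous 6) :
    g = cuspPoly (fun i j k => coeff (cuspEx i j k) g) := by
  refine ext_cuspEx hg (cuspPoly_isHomogeneous _) fun i j k h => ?_
  rw [coeff_cuspPoly _ _ _ _ h]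

/-! ### Evaluation -/

lemma aeval_cuspEx (P : Fin 4 → ℂ) (i j k : ℕ) (x : ℂ) :
    aeval P (monomial (cuspEx i j k) x) = x * (P 0 ^ (6 - i - j - k) * P 1 ^ i * P 2 ^ j * P 3 ^ k) := by
  rw [aeval_monomial, Finsupp.prod_fintype _ _ (by simp)]
  simp [cuspEx, Fin.prod_univ_four]

lemma aeval_pderiv_cuspEx (P : Fin 4 → ℂ) (t : Fin 4) (i j k : ℕ) (x : ℂ) :
    aeval P (pderiv t (monomial (cuspEx i j k) x)) =
      x * (cuspEx i j k t : ℂ) * ∏ s, P s ^ (cuspEx i j k s - if s = t then 1 else 0) := by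
  rw [pderiv_monomial, aeval_monomial, Finsupp.prod_fintype _ _ (by simp)]
  simp [Finsupp.single_apply, eq_comm]

/-- The restriction of a sextic form (or its normal derivative) to a coordinate plane. -/
noncomputable def planeSum (d : ℕ → ℕ → ℂ) (a b : ℂ) : ℂ :=
  ∑ j ∈ Finset.range 7, ∑ k ∈ Finset.range (7 - j), d j k * a ^ j * b ^ k

/-- Extension by zero of the coefficients of a quintic. -/
noncomputable def quint (d : ℕ → ℕ → ℂ) (j k : ℕ) : ℂ := if j + k ≤ 5 then d j k else 0

lemma val1 (c : ℕ → ℕ → ℕ → ℂ) (a b : ℂ) :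
    aeval ![1, 0, a, b] (cuspPoly c) = planeSum (fun j k => c 0 j k) a b := by
  simp only [cuspPoly, map_sum, aeval_cuspEx]
  simp [planeSum, Finset.sum_range_succ]
  try ring
lemma val2 (c : ℕ → ℕ → ℕ → ℂ) (a b : ℂ) :
    aeval ![1, a, 0, b] (cuspPoly c) = planeSum (fun j k => c j 0 k) a b := by
  simp only [cuspPoly, map_sum, aeval_cuspEx]
  simp [planeSum, Finset.sum_range_succ]
  try ring
lemma val3 (c : ℕ → ℕ → ℕ → ℂ) (a b : ℂ) :
    aeval ![1, a, b, 0] (cuspPoly c) = planeSum (fun j k => c j k 0) a b := by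
  simp only [cuspPoly, map_sum, aeval_cuspEx]
  simp [planeSum, Finset.sum_range_succ]
  try ring
set_option maxHeartbeats 2000000 in
lemma der1 (c : ℕ → ℕ → ℕ → ℂ) (a b : ℂ) :
    aeval ![1, 0, a, b] (pderiv 1 (cuspPoly c)) = planeSum (quint fun j k => c 1 j k) a b := by
  simp only [cuspPoly, map_sum, aeval_pderiv_cuspEx]
  simp [planeSum, quint, Finset.sum_range_succ, Fin.prod_univ_four, cuspEx]
  try ring
set_option maxHeartbeats 2000000 in
lemma der2 (c : ℕ → ℕ → ℕ → ℂ) (a b : ℂ) :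
    aeval ![1, a, 0, b] (pderiv 2 (cuspPoly c)) = planeSum (quint fun j k => c j 1 k) a b := by
  simp only [cuspPoly, map_sum, aeval_pderiv_cuspEx]
  simp [planeSum, quint, Finset.sum_range_succ, Fin.prod_univ_four, cuspEx]
  try ring
set_option maxHeartbeats 2000000 in
lemma der3 (c : ℕ → ℕ → ℕ → ℂ) (a b : ℂ) :
    aeval ![1, a, b, 0] (pderiv 3 (cuspPoly c)) = planeSum (quint fun j k => c j k 1) a b := by
  simp only [cuspPoly, map_sum, aeval_pderiv_cuspEx]
  simp [planeSum, quint, Finset.sum_range_succ, Fin.prod_univ_four, cuspEx]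
  try ring

/-! ### Separating the residue classes -/

/-- The nine equations expressing vanishing at the nine points. -/
def Nine (d : ℕ → ℕ → ℂ) : Prop :=
  d 0 0 - (d 3 0 + d 0 3) / 3 + (d 6 0 + d 3 3 + d 0 6) / 9 = 0 ∧
  d 0 1 - (d 3 1 + d 0 4) / 3 = 0 ∧
  d 0 2 - (d 3 2 + d 0 5) / 3 = 0 ∧
  d 1 0 - (d 4 0 + d 1 3) / 3 = 0 ∧
  d 1 1 - (d 4 1 + d 1 4) / 3 = 0 ∧
  d 1 2 - (d 4 2 + d 1 5) / 3 = 0 ∧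
  d 2 0 - (d 5 0 + d 2 3) / 3 = 0 ∧
  d 2 1 - (d 5 1 + d 2 4) / 3 = 0 ∧
  d 2 2 = 0

lemma sep_one (x y z : ℂ) (h : ∀ a : ℂ, a ^ 3 = -(1/3) → x + y * a + z * a ^ 2 = 0) :
    x = 0 ∧ y = 0 ∧ z = 0 := by
  obtain ⟨α, hα⟩ := IsAlgClosed.exists_pow_nat_eq (-(1/3) : ℂ) (n := 3) (by norm_num)
  have hα0 : α ≠ 0 := by rintro rfl; norm_num at hα
  obtain ⟨s, hs⟩ := IsAlgClosed.exists_pow_nat_eq (-3 : ℂ) (n := 2) (by norm_num)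
  obtain ⟨w, hw⟩ : ∃ w : ℂ, w ^ 2 + w + 1 = 0 := ⟨(-1 + s) / 2, by linear_combination hs / 4⟩
  have hw3 : w ^ 3 = 1 := by linear_combination (w - 1) * hw
  have e1 := h α hα
  have e2 := h (α * w) (by rw [mul_pow, hα, hw3, mul_one])
  have e3 := h (α * w ^ 2) (by rw [mul_pow, hα, ← pow_mul, mul_comm 2 3, pow_mul, hw3]; norm_num)
  have hx : x = 0 := by
    linear_combination (e1 + e2 + e3) / 3 - y * α / 3 * hw - z * α ^ 2 / 3 * (w ^ 2 - w + 1) * hw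
  have hy : α * y = 0 := by
    linear_combination (e1 + w ^ 2 * e2 + w * e3) / 3 - x / 3 * hw
      - z * α ^ 2 / 3 * (w ^ 3 - w + 1) * hw
      - 2 * y * α / 3 * hw3
  have hz : α ^ 2 * z = 0 := by
    subst hx
    have : y = 0 := by simpa [hα0] using hy
    subst this
    linear_combination e1
  refine ⟨hx, by simpa [hα0] using hy, by simpa [hα0] using hz⟩

lemma planeSum_reduce (d : ℕ → ℕ → ℂ) (a b : ℂ) (ha : a ^ 3 = -(1/3)) (hb : b ^ 3 = -(1/3)) :
    planeSum d a b =
    ((d 0 0 - (d 3 0 + d 0 3) / 3 + (d 6 0 + d 3 3 + d 0 6) / 9) +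
      (d 0 1 - (d 3 1 + d 0 4) / 3) * b + (d 0 2 - (d 3 2 + d 0 5) / 3) * b ^ 2) +
    ((d 1 0 - (d 4 0 + d 1 3) / 3) + (d 1 1 - (d 4 1 + d 1 4) / 3) * b +
      (d 1 2 - (d 4 2 + d 1 5) / 3) * b ^ 2) * a +
    ((d 2 0 - (d 5 0 + d 2 3) / 3) + (d 2 1 - (d 5 1 + d 2 4) / 3) * b +
      (d 2 2) * b ^ 2) * a ^ 2 := by
  have a4 : a ^ 4 = -(1/3) * a := by rw [pow_succ, ha]
  have a5 : a ^ 5 = -(1/3) * a ^ 2 := by rw [← ha]; ring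
  have a6 : a ^ 6 = 1/9 := by linear_combination (a ^ 3 - 1/3) * ha
  have b4 : b ^ 4 = -(1/3) * b := by rw [pow_succ, hb]
  have b5 : b ^ 5 = -(1/3) * b ^ 2 := by rw [← hb]; ring
  have b6 : b ^ 6 = 1/9 := by linear_combination (b ^ 3 - 1/3) * hb
  simp [planeSum, Finset.sum_range_succ]
  simp only [ha, hb, a4, a5, a6, b4, b5, b6]
  ring

lemma nine_iff (d : ℕ → ℕ → ℂ) :
    (∀ a b : ℂ, a ^ 3 = -(1/3) → b ^ 3 = -(1/3) → planeSum d a b = 0) ↔ Nine d := by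
  constructor
  · intro h
    have key := fun b hb => sep_one _ _ _ fun a ha => (planeSum_reduce d a b ha hb).symm.trans (h a b ha hb)
    obtain ⟨h1, h2, h3⟩ := sep_one _ _ _ fun b hb => (key b hb).1
    obtain ⟨h4, h5, h6⟩ := sep_one _ _ _ fun b hb => (key b hb).2.1
    obtain ⟨h7, h8, h9⟩ := sep_one _ _ _ fun b hb => (key b hb).2.2
    exact ⟨h1, h2, h3, h4, h5, h6, h7, h8, h9⟩
  · rintro ⟨h1, h2, h3, h4, h5, h6, h7, h8, h9⟩ a b ha hb
    rw [planeSum_reduce d a b ha hb, h1, h2, h3, h4, h5, h6, h7, h8, h9]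
    ring

/-! ### The cusp conditions -/

lemma dirDeriv_apply (P w : Fin 4 → ℂ) (g : MvPolynomial (Fin 4) ℂ) :
    dirDeriv P w g = w 0 * aeval P (pderiv 0 g) + w 1 * aeval P (pderiv 1 g)
      + w 2 * aeval P (pderiv 2 g) + w 3 * aeval P (pderiv 3 g) := by
  simp [dirDeriv, Fin.sum_univ_four]

lemma euler_six {g : MvPolynomial (Fin 4) ℂ} (hg : g.IsHomogeneous 6) (P : Fin 4 → ℂ) :
    P 0 * aeval P (pderiv 0 g) + P 1 * aeval P (pderiv 1 g)
      + P 2 * aeval P (pderiv 2 g) + P 3 * aeval P (pderiv 3 g) = 6 * aeval P g := by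
  have h := congrArg (aeval P : MvPolynomial (Fin 4) ℂ →ₐ[ℂ] ℂ) hg.sum_X_mul_pderiv
  simpa only [Fin.sum_univ_four, map_add, map_mul, aeval_X, map_nsmul, nsmul_eq_mul,
    Nat.cast_ofNat, map_ofNat] using h

lemma dirDeriv_S1 (P w : Fin 4 → ℂ) : dirDeriv P w fermatS1 =
    3 * (w 0 * P 0 ^ 2 + 2 * w 1 * P 1 ^ 2 + w 2 * P 2 ^ 2 + w 3 * P 3 ^ 2) := by
  rw [dirDeriv_apply]
  simp [fermatS1, fermatR, pderiv_X]
  ring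

lemma dirDeriv_S2 (P w : Fin 4 → ℂ) : dirDeriv P w fermatS2 =
    3 * (w 0 * P 0 ^ 2 + w 1 * P 1 ^ 2 + 2 * w 2 * P 2 ^ 2 + w 3 * P 3 ^ 2) := by
  rw [dirDeriv_apply]
  simp [fermatS2, fermatR, pderiv_X]
  ring

lemma dirDeriv_S3 (P w : Fin 4 → ℂ) : dirDeriv P w fermatS3 =
    3 * (w 0 * P 0 ^ 2 + w 1 * P 1 ^ 2 + w 2 * P 2 ^ 2 + 2 * w 3 * P 3 ^ 2) := by
  rw [dirDeriv_apply]
  simp [fermatS3, fermatR, pderiv_X]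
  ring

lemma mem_cuspCondition (P : Fin 4 → ℂ) (Si Sj g : MvPolynomial (Fin 4) ℂ) :
    g ∈ cuspCondition P Si Sj ↔ aeval P g = 0 ∧
      ∀ w, dirDeriv P w Si = 0 → dirDeriv P w Sj = 0 → dirDeriv P w g = 0 := by
  simp [cuspCondition, Submodule.mem_iInf]

/-- Solving the two tangent plane equations. -/
lemma tangent_solve {a b x y z : ℂ} (ha : a ^ 3 = -(1/3)) (hb : b ^ 3 = -(1/3))
    (h1 : x + 2 * y * a ^ 2 + z * b ^ 2 = 0) (h2 : x + y * a ^ 2 + 2 * z * b ^ 2 = 0) :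
    y = x * a ∧ z = x * b := by
  constructor
  · linear_combination (-2 * a) * h1 + a * h2 + 3 * y * ha
  · linear_combination b * h1 + (-2 * b) * h2 + 3 * z * hb

lemma cusp1 {g : MvPolynomial (Fin 4) ℂ} (hg : g.IsHomogeneous 6) {a b : ℂ}
    (ha : a ^ 3 = -(1/3)) (hb : b ^ 3 = -(1/3)) :
    g ∈ cuspCondition ![1, 0, a, b] fermatS2 fermatS3 ↔
      aeval ![1, 0, a, b] g = 0 ∧ aeval ![1, 0, a, b] (pderiv 1 g) = 0 := by
  rw [mem_cuspCondition]
  refine and_congr_right fun h0 => ⟨fun h => ?_, fun h w h1 h2 => ?_⟩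
  · have := h ![0, 1, 0, 0] (by simp [dirDeriv_S2]) (by simp [dirDeriv_S3])
    simpa only [dirDeriv_apply, Matrix.cons_val, zero_mul, one_mul, zero_add, add_zero] using this
  · have e := euler_six hg ![1, 0, a, b]
    rw [dirDeriv_S2] at h1
    rw [dirDeriv_S3] at h2
    rw [dirDeriv_apply]
    simp only [Matrix.cons_val] at h1 h2 e
    obtain ⟨hy, hz⟩ := tangent_solve (x := w 0) (y := w 2) (z := w 3) ha hb
      (by linear_combination h1 / 3) (by linear_combination h2 / 3)
    rw [hy, hz]
    linear_combination w 0 * e + w 1 * h + 6 * w 0 * h0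

lemma cusp2 {g : MvPolynomial (Fin 4) ℂ} (hg : g.IsHomogeneous 6) {a b : ℂ}
    (ha : a ^ 3 = -(1/3)) (hb : b ^ 3 = -(1/3)) :
    g ∈ cuspCondition ![1, a, 0, b] fermatS1 fermatS3 ↔
      aeval ![1, a, 0, b] g = 0 ∧ aeval ![1, a, 0, b] (pderiv 2 g) = 0 := by
  rw [mem_cuspCondition]
  refine and_congr_right fun h0 => ⟨fun h => ?_, fun h w h1 h2 => ?_⟩
  · have := h ![0, 0, 1, 0] (by simp [dirDeriv_S1]) (by simp [dirDeriv_S3])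
    simpa only [dirDeriv_apply, Matrix.cons_val, zero_mul, one_mul, zero_add, add_zero] using this
  · have e := euler_six hg ![1, a, 0, b]
    rw [dirDeriv_S1] at h1
    rw [dirDeriv_S3] at h2
    rw [dirDeriv_apply]
    simp only [Matrix.cons_val] at h1 h2 e
    obtain ⟨hy, hz⟩ := tangent_solve (x := w 0) (y := w 1) (z := w 3) ha hb
      (by linear_combination h1 / 3) (by linear_combination h2 / 3)
    rw [hy, hz]
    linear_combination w 0 * e + w 2 * h + 6 * w 0 * h0

lemma cusp3 {g : MvPolynomial (Fin 4) ℂ} (hg : g.IsHomogeneous 6) {a b : ℂ}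
    (ha : a ^ 3 = -(1/3)) (hb : b ^ 3 = -(1/3)) :
    g ∈ cuspCondition ![1, a, b, 0] fermatS1 fermatS2 ↔
      aeval ![1, a, b, 0] g = 0 ∧ aeval ![1, a, b, 0] (pderiv 3 g) = 0 := by
  rw [mem_cuspCondition]
  refine and_congr_right fun h0 => ⟨fun h => ?_, fun h w h1 h2 => ?_⟩
  · have := h ![0, 0, 0, 1] (by simp [dirDeriv_S1]) (by simp [dirDeriv_S2])
    simpa only [dirDeriv_apply, Matrix.cons_val, zero_mul, one_mul, zero_add, add_zero] using this
  · have e := euler_six hg ![1, a, b, 0]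
    rw [dirDeriv_S1] at h1
    rw [dirDeriv_S2] at h2
    rw [dirDeriv_apply]
    simp only [Matrix.cons_val] at h1 h2 e
    obtain ⟨hy, hz⟩ := tangent_solve (x := w 0) (y := w 1) (z := w 2) ha hb
      (by linear_combination h1 / 3) (by linear_combination h2 / 3)
    rw [hy, hz]
    linear_combination w 0 * e + w 3 * h + 6 * w 0 * h0

/-- All fifty-four equations on the coefficients. -/
def AllNine (c : ℕ → ℕ → ℕ → ℂ) : Prop :=
  (Nine (fun j k => c 0 j k) ∧ Nine (quint fun j k => c 1 j k)) ∧
  (Nine (fun j k => c j 0 k) ∧ Nine (quint fun j k => c j 1 k)) ∧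
  (Nine (fun j k => c j k 0) ∧ Nine (quint fun j k => c j k 1))

lemma mem_adapted_iff (c : ℕ → ℕ → ℕ → ℂ) :
    cuspPoly c ∈ sexticsAdaptedToFermatCusps ↔ AllNine c := by
  have hg := cuspPoly_isHomogeneous c
  have step : cuspPoly c ∈ sexticsAdaptedToFermatCusps ↔
      ∀ a b : ℂ, a ^ 3 = -(1/3) → b ^ 3 = -(1/3) →
        ((cuspPoly c ∈ cuspCondition ![1, 0, a, b] fermatS2 fermatS3 ∧
          cuspPoly c ∈ cuspCondition ![1, a, 0, b] fermatS1 fermatS3) ∧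
          cuspPoly c ∈ cuspCondition ![1, a, b, 0] fermatS1 fermatS2) := by
    simp only [sexticsAdaptedToFermatCusps, Submodule.mem_inf, Submodule.mem_iInf,
      mem_homogeneousSubmodule, hg, true_and, and_imp]
  rw [step]
  simp only [AllNine, ← nine_iff]
  constructor
  · intro h
    refine ⟨⟨?_, ?_⟩, ⟨?_, ?_⟩, ⟨?_, ?_⟩⟩ <;> intro a b ha hb <;> obtain ⟨⟨h1, h2⟩, h3⟩ := h a b ha hb
    · rw [← val1]; exact ((cusp1 hg ha hb).1 h1).1
    · rw [← der1]; exact ((cusp1 hg ha hb).1 h1).2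
    · rw [← val2]; exact ((cusp2 hg ha hb).1 h2).1
    · rw [← der2]; exact ((cusp2 hg ha hb).1 h2).2
    · rw [← val3]; exact ((cusp3 hg ha hb).1 h3).1
    · rw [← der3]; exact ((cusp3 hg ha hb).1 h3).2
  · rintro ⟨⟨h1, h2⟩, ⟨h3, h4⟩, ⟨h5, h6⟩⟩ a b ha hb
    refine ⟨⟨(cusp1 hg ha hb).2 ⟨?_, ?_⟩, (cusp2 hg ha hb).2 ⟨?_, ?_⟩⟩, (cusp3 hg ha hb).2 ⟨?_, ?_⟩⟩
    · rw [val1]; exact h1 a b ha hb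
    · rw [der1]; exact h2 a b ha hb
    · rw [val2]; exact h3 a b ha hb
    · rw [der2]; exact h4 a b ha hb
    · rw [val3]; exact h5 a b ha hb
    · rw [der3]; exact h6 a b ha hb

/-! ### Solving the equations -/

/-- The monomials whose coefficients are free parameters. -/
def freeIdx : Fin 33 → ℕ × ℕ × ℕ :=
  ![(0, 0, 0), (3, 0, 0), (0, 3, 0), (0, 0, 3), (6, 0, 0), (0, 6, 0),
    (0, 0, 6), (0, 1, 2), (0, 1, 5), (0, 2, 1), (0, 5, 1), (1, 0, 2),
    (1, 0, 5), (1, 1, 1), (1, 2, 0), (1, 5, 0), (2, 0, 1), (5, 0, 1),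
    (2, 1, 0), (5, 1, 0), (2, 2, 2), (0, 0, 2), (0, 0, 5), (0, 1, 1),
    (0, 2, 0), (0, 5, 0), (1, 0, 1), (1, 1, 0), (2, 0, 0), (5, 0, 0),
    (0, 0, 1), (0, 1, 0), (1, 0, 0)]

/-- The solution of the equations with given free parameters. -/
noncomputable def sol (v : Fin 33 → ℂ) : ℕ → ℕ → ℕ → ℂ
  | 0, 0, 0 => v 0
  | 0, 0, 1 => v 30
  | 0, 0, 2 => v 21
  | 0, 0, 3 => v 3
  | 0, 0, 4 => 3 / 2 * v 30
  | 0, 0, 5 => v 22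
  | 0, 0, 6 => v 6
  | 0, 1, 0 => v 31
  | 0, 1, 1 => v 23
  | 0, 1, 2 => v 7
  | 0, 1, 3 => 3 / 2 * v 31
  | 0, 1, 4 => 3 / 2 * v 23
  | 0, 1, 5 => v 8
  | 0, 2, 0 => v 24
  | 0, 2, 1 => v 9
  | 0, 2, 3 => 3 * v 24 - v 25
  | 0, 2, 4 => 3 * v 9 - v 10
  | 0, 3, 0 => v 2
  | 0, 3, 1 => 3 / 2 * v 30
  | 0, 3, 2 => 3 * v 21 - v 22
  | 0, 3, 3 => 3 * (v 2 + v 3) - 9 * v 0 - v 5 - v 6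
  | 0, 4, 0 => 3 / 2 * v 31
  | 0, 4, 1 => 3 / 2 * v 23
  | 0, 4, 2 => 3 * v 7 - v 8
  | 0, 5, 0 => v 25
  | 0, 5, 1 => v 10
  | 0, 6, 0 => v 5
  | 1, 0, 0 => v 32
  | 1, 0, 1 => v 26
  | 1, 0, 2 => v 11
  | 1, 0, 3 => 3 / 2 * v 32
  | 1, 0, 4 => 3 / 2 * v 26
  | 1, 0, 5 => v 12
  | 1, 1, 0 => v 27
  | 1, 1, 1 => v 13
  | 1, 1, 3 => 3 / 2 * v 27
  | 1, 1, 4 => 3 / 2 * v 13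
  | 1, 2, 0 => v 14
  | 1, 2, 3 => 3 * v 14 - v 15
  | 1, 3, 0 => 3 / 2 * v 32
  | 1, 3, 1 => 3 / 2 * v 26
  | 1, 3, 2 => 3 * v 11 - v 12
  | 1, 4, 0 => 3 / 2 * v 27
  | 1, 4, 1 => 3 / 2 * v 13
  | 1, 5, 0 => v 15
  | 2, 0, 0 => v 28
  | 2, 0, 1 => v 16
  | 2, 0, 3 => 3 * v 28 - v 29
  | 2, 0, 4 => 3 * v 16 - v 17
  | 2, 1, 0 => v 18
  | 2, 1, 3 => 3 * v 18 - v 19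
  | 2, 2, 2 => v 20
  | 2, 3, 0 => 3 * v 28 - v 29
  | 2, 3, 1 => 3 * v 16 - v 17
  | 2, 4, 0 => 3 * v 18 - v 19
  | 3, 0, 0 => v 1
  | 3, 0, 1 => 3 / 2 * v 30
  | 3, 0, 2 => 3 * v 21 - v 22
  | 3, 0, 3 => 3 * (v 1 + v 3) - 9 * v 0 - v 4 - v 6
  | 3, 1, 0 => 3 / 2 * v 31
  | 3, 1, 1 => 3 / 2 * v 23
  | 3, 1, 2 => 3 * v 7 - v 8
  | 3, 2, 0 => 3 * v 24 - v 25
  | 3, 2, 1 => 3 * v 9 - v 10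
  | 3, 3, 0 => 3 * (v 1 + v 2) - 9 * v 0 - v 4 - v 5
  | 4, 0, 0 => 3 / 2 * v 32
  | 4, 0, 1 => 3 / 2 * v 26
  | 4, 0, 2 => 3 * v 11 - v 12
  | 4, 1, 0 => 3 / 2 * v 27
  | 4, 1, 1 => 3 / 2 * v 13
  | 4, 2, 0 => 3 * v 14 - v 15
  | 5, 0, 0 => v 29
  | 5, 0, 1 => v 17
  | 5, 1, 0 => v 19
  | 6, 0, 0 => v 4
  | _, _, _ => 0

lemma sol_free (v : Fin 33 → ℂ) (n : Fin 33) :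
    sol v (freeIdx n).1 (freeIdx n).2.1 (freeIdx n).2.2 = v n := by
  fin_cases n <;> rfl

lemma freeIdx_le (n : Fin 33) : (freeIdx n).1 + (freeIdx n).2.1 + (freeIdx n).2.2 ≤ 6 := by
  revert n; decide

set_option maxHeartbeats 4000000 in
lemma sol_allNine (v : Fin 33 → ℂ) : AllNine (sol v) := by
  have s0 : sol v 0 0 0 = v 0 := rfl
  have s1 : sol v 0 0 1 = v 30 := rfl
  have s2 : sol v 0 0 2 = v 21 := rfl
  have s3 : sol v 0 0 3 = v 3 := rfl
  have s4 : sol v 0 0 4 = 3 / 2 * v 30 := rfl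
  have s5 : sol v 0 0 5 = v 22 := rfl
  have s6 : sol v 0 0 6 = v 6 := rfl
  have s7 : sol v 0 1 0 = v 31 := rfl
  have s8 : sol v 0 1 1 = v 23 := rfl
  have s9 : sol v 0 1 2 = v 7 := rfl
  have s10 : sol v 0 1 3 = 3 / 2 * v 31 := rfl
  have s11 : sol v 0 1 4 = 3 / 2 * v 23 := rfl
  have s12 : sol v 0 1 5 = v 8 := rfl
  have s13 : sol v 0 2 0 = v 24 := rfl
  have s14 : sol v 0 2 1 = v 9 := rfl
  have s15 : sol v 0 2 2 = 0 := rfl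
  have s16 : sol v 0 2 3 = 3 * v 24 - v 25 := rfl
  have s17 : sol v 0 2 4 = 3 * v 9 - v 10 := rfl
  have s18 : sol v 0 3 0 = v 2 := rfl
  have s19 : sol v 0 3 1 = 3 / 2 * v 30 := rfl
  have s20 : sol v 0 3 2 = 3 * v 21 - v 22 := rfl
  have s21 : sol v 0 3 3 = 3 * (v 2 + v 3) - 9 * v 0 - v 5 - v 6 := rfl
  have s22 : sol v 0 4 0 = 3 / 2 * v 31 := rfl
  have s23 : sol v 0 4 1 = 3 / 2 * v 23 := rfl
  have s24 : sol v 0 4 2 = 3 * v 7 - v 8 := rfl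
  have s25 : sol v 0 5 0 = v 25 := rfl
  have s26 : sol v 0 5 1 = v 10 := rfl
  have s27 : sol v 0 6 0 = v 5 := rfl
  have s28 : sol v 1 0 0 = v 32 := rfl
  have s29 : sol v 1 0 1 = v 26 := rfl
  have s30 : sol v 1 0 2 = v 11 := rfl
  have s31 : sol v 1 0 3 = 3 / 2 * v 32 := rfl
  have s32 : sol v 1 0 4 = 3 / 2 * v 26 := rfl
  have s33 : sol v 1 0 5 = v 12 := rfl
  have s34 : sol v 1 1 0 = v 27 := rfl
  have s35 : sol v 1 1 1 = v 13 := rfl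
  have s36 : sol v 1 1 2 = 0 := rfl
  have s37 : sol v 1 1 3 = 3 / 2 * v 27 := rfl
  have s38 : sol v 1 1 4 = 3 / 2 * v 13 := rfl
  have s39 : sol v 1 2 0 = v 14 := rfl
  have s40 : sol v 1 2 1 = 0 := rfl
  have s41 : sol v 1 2 2 = 0 := rfl
  have s42 : sol v 1 2 3 = 3 * v 14 - v 15 := rfl
  have s43 : sol v 1 3 0 = 3 / 2 * v 32 := rfl
  have s44 : sol v 1 3 1 = 3 / 2 * v 26 := rfl
  have s45 : sol v 1 3 2 = 3 * v 11 - v 12 := rfl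
  have s46 : sol v 1 4 0 = 3 / 2 * v 27 := rfl
  have s47 : sol v 1 4 1 = 3 / 2 * v 13 := rfl
  have s48 : sol v 1 5 0 = v 15 := rfl
  have s49 : sol v 2 0 0 = v 28 := rfl
  have s50 : sol v 2 0 1 = v 16 := rfl
  have s51 : sol v 2 0 2 = 0 := rfl
  have s52 : sol v 2 0 3 = 3 * v 28 - v 29 := rfl
  have s53 : sol v 2 0 4 = 3 * v 16 - v 17 := rfl
  have s54 : sol v 2 1 0 = v 18 := rfl
  have s55 : sol v 2 1 1 = 0 := rfl
  have s56 : sol v 2 1 2 = 0 := rfl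
  have s57 : sol v 2 1 3 = 3 * v 18 - v 19 := rfl
  have s58 : sol v 2 2 0 = 0 := rfl
  have s59 : sol v 2 2 1 = 0 := rfl
  have s60 : sol v 2 2 2 = v 20 := rfl
  have s61 : sol v 2 3 0 = 3 * v 28 - v 29 := rfl
  have s62 : sol v 2 3 1 = 3 * v 16 - v 17 := rfl
  have s63 : sol v 2 4 0 = 3 * v 18 - v 19 := rfl
  have s64 : sol v 3 0 0 = v 1 := rfl
  have s65 : sol v 3 0 1 = 3 / 2 * v 30 := rfl
  have s66 : sol v 3 0 2 = 3 * v 21 - v 22 := rfl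
  have s67 : sol v 3 0 3 = 3 * (v 1 + v 3) - 9 * v 0 - v 4 - v 6 := rfl
  have s68 : sol v 3 1 0 = 3 / 2 * v 31 := rfl
  have s69 : sol v 3 1 1 = 3 / 2 * v 23 := rfl
  have s70 : sol v 3 1 2 = 3 * v 7 - v 8 := rfl
  have s71 : sol v 3 2 0 = 3 * v 24 - v 25 := rfl
  have s72 : sol v 3 2 1 = 3 * v 9 - v 10 := rfl
  have s73 : sol v 3 3 0 = 3 * (v 1 + v 2) - 9 * v 0 - v 4 - v 5 := rfl
  have s74 : sol v 4 0 0 = 3 / 2 * v 32 := rfl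
  have s75 : sol v 4 0 1 = 3 / 2 * v 26 := rfl
  have s76 : sol v 4 0 2 = 3 * v 11 - v 12 := rfl
  have s77 : sol v 4 1 0 = 3 / 2 * v 27 := rfl
  have s78 : sol v 4 1 1 = 3 / 2 * v 13 := rfl
  have s79 : sol v 4 2 0 = 3 * v 14 - v 15 := rfl
  have s80 : sol v 5 0 0 = v 29 := rfl
  have s81 : sol v 5 0 1 = v 17 := rfl
  have s82 : sol v 5 1 0 = v 19 := rfl
  have s83 : sol v 6 0 0 = v 4 := rfl
  refine ⟨⟨?_, ?_⟩, ⟨?_, ?_⟩, ⟨?_, ?_⟩⟩ <;>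
  refine ⟨?_, ?_, ?_, ?_, ?_, ?_, ?_, ?_, ?_⟩ <;>
  norm_num [quint, s0, s1, s2, s3, s4, s5, s6, s7, s8, s9, s10, s11, s12, s13, s14, s15, s16, s17, s18, s19,
    s20, s21, s22, s23, s24, s25, s26, s27, s28, s29, s30, s31, s32, s33, s34, s35, s36, s37,
    s38, s39, s40, s41, s42, s43, s44, s45, s46, s47, s48, s49, s50, s51, s52, s53, s54, s55,
    s56, s57, s58, s59, s60, s61, s62, s63, s64, s65, s66, s67, s68, s69, s70, s71, s72, s73,
    s74, s75, s76, s77, s78, s79, s80, s81, s82, s83] <;> ring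

set_option maxHeartbeats 4000000 in
lemma eq_zero_of_free (c : ℕ → ℕ → ℕ → ℂ) (h : AllNine c)
    (h0 : ∀ n, c (freeIdx n).1 (freeIdx n).2.1 (freeIdx n).2.2 = 0) (i j k : ℕ)
    (hijk : i + j + k ≤ 6) : c i j k = 0 := by
  have z0 : c 0 0 0 = 0 := h0 0
  have z1 : c 3 0 0 = 0 := h0 1
  have z2 : c 0 3 0 = 0 := h0 2
  have z3 : c 0 0 3 = 0 := h0 3
  have z4 : c 6 0 0 = 0 := h0 4
  have z5 : c 0 6 0 = 0 := h0 5
  have z6 : c 0 0 6 = 0 := h0 6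
  have z7 : c 0 1 2 = 0 := h0 7
  have z8 : c 0 1 5 = 0 := h0 8
  have z9 : c 0 2 1 = 0 := h0 9
  have z10 : c 0 5 1 = 0 := h0 10
  have z11 : c 1 0 2 = 0 := h0 11
  have z12 : c 1 0 5 = 0 := h0 12
  have z13 : c 1 1 1 = 0 := h0 13
  have z14 : c 1 2 0 = 0 := h0 14
  have z15 : c 1 5 0 = 0 := h0 15
  have z16 : c 2 0 1 = 0 := h0 16
  have z17 : c 5 0 1 = 0 := h0 17
  have z18 : c 2 1 0 = 0 := h0 18
  have z19 : c 5 1 0 = 0 := h0 19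
  have z20 : c 2 2 2 = 0 := h0 20
  have z21 : c 0 0 2 = 0 := h0 21
  have z22 : c 0 0 5 = 0 := h0 22
  have z23 : c 0 1 1 = 0 := h0 23
  have z24 : c 0 2 0 = 0 := h0 24
  have z25 : c 0 5 0 = 0 := h0 25
  have z26 : c 1 0 1 = 0 := h0 26
  have z27 : c 1 1 0 = 0 := h0 27
  have z28 : c 2 0 0 = 0 := h0 28
  have z29 : c 5 0 0 = 0 := h0 29
  have z30 : c 0 0 1 = 0 := h0 30
  have z31 : c 0 1 0 = 0 := h0 31
  have z32 : c 1 0 0 = 0 := h0 32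
  simp only [AllNine, Nine, quint] at h
  norm_num [z0, z1, z2, z3, z4, z5, z6, z7, z8, z9, z10, z11, z12, z13, z14, z15, z16, z17, z18, z19,
    z20, z21, z22, z23, z24, z25, z26, z27, z28, z29, z30, z31, z32] at h
  clear h0
  have hi : i ≤ 6 := by omega
  have hj : j ≤ 6 - i := by omega
  have hk : k ≤ 6 - i - j := by omega
  clear hijk
  interval_cases i <;> simp only [Nat.reduceSub] at hj <;> interval_cases j <;>
    simp only [Nat.reduceSub] at hk <;> interval_cases k <;>
    first
      | assumption
      | grind

/-- The free coefficients of an adapted sextic. -/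
noncomputable def freeCoeff : sexticsAdaptedToFermatCusps →ₗ[ℂ] (Fin 33 → ℂ) where
  toFun g n := coeff (cuspEx (freeIdx n).1 (freeIdx n).2.1 (freeIdx n).2.2) g.1
  map_add' f g := by ext n; simp
  map_smul' r g := by ext n; simp

lemma freeCoeff_bijective : Function.Bijective freeCoeff := by
  constructor
  · rw [← LinearMap.ker_eq_bot, LinearMap.ker_eq_bot']
    rintro ⟨g, hg⟩ h
    have hom : g.IsHomogeneous 6 := hg.1
    rw [Submodule.mk_eq_zero]
    refine ext_cuspEx hom (isHomogeneous_zero _ _ _) fun i j k hijk => ?_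
    rw [coeff_zero]
    refine eq_zero_of_free (fun i j k => coeff (cuspEx i j k) g) ?_ (fun n => congrFun h n) i j k hijk
    rw [← mem_adapted_iff, ← eq_cuspPoly hom]
    exact hg
  · intro v
    refine ⟨⟨cuspPoly (sol v), (mem_adapted_iff _).2 (sol_allNine v)⟩, ?_⟩
    ext n
    exact (coeff_cuspPoly _ _ _ _ (freeIdx_le n)).trans (sol_free v n)

/-- The conditions at the `27` cusps have rank `51` on the `84`-dimensional space of
sextic forms: the space of adapted sextics has dimension `33`. -/
theorem finrank_sextics_adapted_to_fermat_cusps :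
    Module.finrank ℂ ↥sexticsAdaptedToFermatCusps = 33 := by
  rw [(LinearEquiv.ofBijective freeCoeff freeCoeff_bijective).finrank_eq]
  simp
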